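/- There exists a constant C > 0 such that for all δ ∈ (0,1], all ε, ε̃ ≥ 0 and i ∈ {1,2}: (i) Γ_i(ξ; ε, ε̃, δ) ≤ Γ̂_i(ξ; δ) for all ξ ≥ 0; (ii) for all ξ ∈ [0,1], 0 ≤ Γ̂_i(ξ; δ) − Γ_i(ξ; ε, ε̃, δ) ≤ (exp(C·(ε + ε̃)/√δ) − 1)·Γ̂_i(ξ; δ). In particular, if ε + ε̃ = o(√δ) then |Γ_i − Γ̂_i| = o(1)·Γ̂_i uniformly on [0,1]. -/

import Mathlib

/-!
The two exponents in `Γ_i` and `Γ̂_i` differ by `∫_z^ξ a_δ(y) (ε̃ y + ε) dy`, which is nonnegative and,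
for `0 ≤ z ≤ ξ ≤ 1`, at most `(ε + ε̃) ∫₀¹ a_δ`. Everything therefore rests on the bound
`∫₀¹ a_δ ≤ 18 π / √δ` (`integral_aF_le`). With `s = z^(1/3)` and `s₀ = (1/2)^(1/3)` one has
`λ_LSW = 3 s₀²` and `1 = 2 s₀³`, so the denominator of `a_δ` equals `(s - s₀)² (s + 2 s₀) + δ s`: the
polynomial has a double zero at `s₀`, i.e. at `z = 1/2`. On `[0, 1]` this dominates
`(δ + (z - 1/2)²) / 18` (`denF_lower`), whose reciprocal integrates to an arctangent.

Hence `e^{-K} Γ̂_i ≤ Γ_i ≤ Γ̂_i` on `[0, 1]` with `K = 18 π (ε + ε̃) / √δ`, and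
`1 - e^{-K} ≤ e^K - 1` gives the claim.
-/

open MeasureTheory Set Filter

/-- λ_LSW := 3 (1/2)^(2/3) -/
noncomputable def lamLSW : ℝ := 3 * (1/2 : ℝ) ^ ((2:ℝ)/3)

/-- a_δ(z) := 1/(1 + z − (λ_LSW − δ) z^(1/3)) -/
noncomputable def aF (δ z : ℝ) : ℝ := 1 / (1 + z - (lamLSW - δ) * z ^ ((1:ℝ)/3))

/-- b_δ(z) := 2 − (1/3)(λ_LSW − δ) z^(−2/3) -/
noncomputable def bF (δ z : ℝ) : ℝ := 2 - (1/3) * (lamLSW - δ) * z ^ (-(2:ℝ)/3)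

/-- ‖Φ‖_sup := sup_{0≤z≤1} |Φ(z)| -/
noncomputable def normSup (Φ : ℝ → ℝ) : ℝ := sSup ((fun z => |Φ z|) '' Icc (0:ℝ) 1)

/-- ‖Φ‖_tail := sup_{z≥1} |Φ(z)| e^{β₁ z} z^{β₂} -/
noncomputable def normTail (β₁ β₂ : ℝ) (Φ : ℝ → ℝ) : ℝ :=
  sSup ((fun z => |Φ z| * Real.exp (β₁ * z) * z ^ β₂) '' Ici (1:ℝ))

/-- ‖Φ‖_Z := ‖Φ‖_sup + ‖Φ‖_tail -/
noncomputable def normZ (β₁ β₂ : ℝ) (Φ : ℝ → ℝ) : ℝ := normSup Φ + normTail β₁ β₂ Φ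

/-- membership in the space Z: measurable with finite norm -/
def memZ (β₁ β₂ : ℝ) (Φ : ℝ → ℝ) : Prop :=
  Measurable Φ ∧ BddAbove ((fun z => |Φ z|) '' Icc (0:ℝ) 1) ∧
    BddAbove ((fun z => |Φ z| * Real.exp (β₁ * z) * z ^ β₂) '' Ici (1:ℝ))

/-- (Φ₁ * Φ₂)(z) := (1/2) ∫₀^z Φ₁(z−y) Φ₂(y) dy -/
noncomputable def conv (Φ₁ Φ₂ : ℝ → ℝ) (z : ℝ) : ℝ :=
  (1/2) * ∫ y in (0:ℝ)..z, Φ₁ (z - y) * Φ₂ y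

/-- unnormalized solution of the homogeneous ODE -/
noncomputable def psi0 (δ ε εt z : ℝ) : ℝ :=
  Real.exp (-∫ y in (0:ℝ)..z, aF δ y * (bF δ y - εt * y - ε))

/-- ψ(z; ε, ε̃, δ), normalized so that ∫₀¹ z ψ dz = 1 -/
noncomputable def psi (δ ε εt z : ℝ) : ℝ :=
  psi0 δ ε εt z / ∫ t in (0:ℝ)..1, t * psi0 δ ε εt t

/-- the smooth LSW self-similar profile -/
noncomputable def PhiLSW (z : ℝ) : ℝ :=
  if z ≤ 1/2 then
    Real.exp (-∫ y in (0:ℝ)..z, aF 0 y * bF 0 y) /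
      ∫ t in (0:ℝ)..(1/2 : ℝ), t * Real.exp (-∫ y in (0:ℝ)..t, aF 0 y * bF 0 y)
  else 0

/-- ρ_δ(ξ) := ξ a_δ(ξ) exp(−∫_ξ^1 a_δ b_δ) -/
noncomputable def rhoF (δ ξ : ℝ) : ℝ :=
  ξ * aF δ ξ * Real.exp (-∫ y in ξ..(1:ℝ), aF δ y * bF δ y)

/-- R_δ[h] := ∫₀¹ ρ_δ(ξ) h(ξ) dξ -/
noncomputable def Rdel (δ : ℝ) (h : ℝ → ℝ) : ℝ := ∫ ξ in (0:ℝ)..1, rhoF δ ξ * h ξ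

/-- R₀[h] := ∫_{1/2}^1 ξ a₀(ξ) h(ξ) exp(−∫_ξ^1 a₀ b₀) dξ -/
noncomputable def Rzero (h : ℝ → ℝ) : ℝ :=
  ∫ ξ in (1/2 : ℝ)..1, ξ * aF 0 ξ * h ξ * Real.exp (-∫ y in ξ..(1:ℝ), aF 0 y * bF 0 y)

/-- γ₁(z) = z, γ₂(z) = 1 -/
noncomputable def gamF (i : ℕ) (z : ℝ) : ℝ := if i = 1 then z else 1

/-- Γ_i(ξ; ε, ε̃, δ) -/
noncomputable def Gam (i : ℕ) (δ ε εt ξ : ℝ) : ℝ :=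
  ∫ z in (0:ℝ)..ξ, gamF i z * Real.exp (∫ y in z..ξ, aF δ y * (bF δ y - εt * y - ε))

/-- Γ̂_i(ξ; δ) := Γ_i(ξ; 0, 0, δ) -/
noncomputable def GamHat (i : ℕ) (δ ξ : ℝ) : ℝ := Gam i δ 0 0 ξ

/-- K_i^δ := Γ̂_i(1; δ) -/
noncomputable def Kc (i : ℕ) (δ : ℝ) : ℝ := GamHat i δ 1

/-- Ĝ_i[h; δ] := ∫₀¹ ξ a_δ(ξ) h(ξ) Γ̂_i(ξ; δ) dξ -/
noncomputable def Ghat (i : ℕ) (δ : ℝ) (h : ℝ → ℝ) : ℝ :=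
  ∫ ξ in (0:ℝ)..1, ξ * aF δ ξ * h ξ * GamHat i δ ξ

/-- G_i[h; ε, ε̃, δ] := ∫₀^∞ ξ a_δ(ξ) h(ξ) Γ_i(ξ; ε, ε̃, δ) dξ -/
noncomputable def Gfull (i : ℕ) (δ ε εt : ℝ) (h : ℝ → ℝ) : ℝ :=
  ∫ ξ in Ioi (0:ℝ), ξ * aF δ ξ * h ξ * Gam i δ ε εt ξ

/-- The denominator of `a_δ`. -/
noncomputable def denF (δ z : ℝ) : ℝ := 1 + z - (lamLSW - δ) * z ^ ((1:ℝ)/3)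

/-- Substituting `s = z^(1/3)`, `s₀ = (1/2)^(1/3)` exhibits the double zero of the denominator at
`δ = 0`, `z = 1/2`. -/
lemma denF_factor {z : ℝ} (hz : 0 ≤ z) : ∃ s s₀ : ℝ, 0 ≤ s ∧ 0 < s₀ ∧ s ^ 3 = z ∧ s₀ ^ 3 = 1 / 2 ∧
    ∀ δ : ℝ, denF δ z = (s - s₀) ^ 2 * (s + 2 * s₀) + δ * s := by
  have hs : (z ^ ((1:ℝ)/3)) ^ 3 = z := by
    rw [← Real.rpow_natCast, ← Real.rpow_mul hz]; norm_num
  have hs₀ : (((1:ℝ)/2) ^ ((1:ℝ)/3)) ^ 3 = 1 / 2 := by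
    rw [← Real.rpow_natCast, ← Real.rpow_mul (by norm_num)]; norm_num
  have hl : lamLSW = 3 * (((1:ℝ)/2) ^ ((1:ℝ)/3)) ^ 2 := by
    rw [lamLSW, ← Real.rpow_natCast (_ ^ _), ← Real.rpow_mul (by norm_num)]; norm_num
  refine ⟨z ^ ((1:ℝ)/3), ((1:ℝ)/2) ^ ((1:ℝ)/3), by positivity, by positivity, hs, hs₀, fun δ => ?_⟩
  rw [denF, hl]
  linear_combination -hs - 2 * hs₀

lemma denF_pos {δ z : ℝ} (hδ : 0 < δ) (hz : 0 ≤ z) : 0 < denF δ z := by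
  obtain ⟨s, s₀, hs, hs₀, -, -, h⟩ := denF_factor hz
  rw [h]
  rcases hs.eq_or_lt with rfl | hs
  · have : 0 < (0 - s₀) ^ 2 * (0 + 2 * s₀) := by
      have : (0 - s₀) ^ 2 * (0 + 2 * s₀) = 2 * s₀ ^ 3 := by ring
      rw [this]; positivity
    simpa using this
  · positivity

lemma denF_lower {δ z : ℝ} (hδ : 0 < δ) (hδ1 : δ ≤ 1) (hz : 0 ≤ z) (hz1 : z ≤ 1) :
    (δ + (z - 1/2) ^ 2) / 18 ≤ denF δ z := by
  obtain ⟨s, s₀, hs, hs₀, h3, h03, h⟩ := denF_factor hz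
  have hs1 : s ≤ 1 := by
    by_contra! hc
    have : 1 < s ^ 3 := one_lt_pow₀ hc (by norm_num)
    linarith
  have hs01 : s₀ ≤ 1 := by
    by_contra! hc
    have : 1 < s₀ ^ 3 := one_lt_pow₀ hc (by norm_num)
    linarith
  have hs02 : 1 / 2 ≤ s₀ := by
    by_contra! hc
    have : s₀ ^ 3 < (1 / 2) ^ 3 := pow_lt_pow_left₀ hc hs₀.le (by norm_num)
    norm_num at this
    linarith
  rw [h]
  -- `z - 1/2 = s³ - s₀³` is at most `3 |s - s₀|` in absolute value.
  have hA : (z - 1/2) ^ 2 / 9 ≤ (s - s₀) ^ 2 * (s + 2 * s₀) := by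
    have hq0 : 0 ≤ s ^ 2 + s * s₀ + s₀ ^ 2 := by positivity
    have hq : s ^ 2 + s * s₀ + s₀ ^ 2 ≤ 3 := by nlinarith
    have hq2 : (s ^ 2 + s * s₀ + s₀ ^ 2) ^ 2 ≤ 9 := by nlinarith
    have : (z - 1/2) ^ 2 = (s - s₀) ^ 2 * (s ^ 2 + s * s₀ + s₀ ^ 2) ^ 2 := by
      rw [← h3, ← h03]; ring
    have h1 := mul_le_mul_of_nonneg_left hq2 (sq_nonneg (s - s₀))
    have h2 := mul_le_mul_of_nonneg_left (show 1 ≤ s + 2 * s₀ by linarith) (sq_nonneg (s - s₀))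
    linarith
  -- Away from `s = 0` the term `δ s` controls `δ`; near `s = 0` the cubic is bounded below.
  have hB : δ / 4 ≤ (s - s₀) ^ 2 * (s + 2 * s₀) + δ * s := by
    rcases le_total (s₀ / 2) s with hc | hc
    · have : δ * (1 / 4) ≤ δ * s := mul_le_mul_of_nonneg_left (by linarith) hδ.le
      have : 0 ≤ (s - s₀) ^ 2 * (s + 2 * s₀) := by positivity
      linarith
    · have h1 : (s₀ / 2) ^ 2 ≤ (s - s₀) ^ 2 := by nlinarith
      have h2 : (s₀ / 2) ^ 2 * (2 * s₀) ≤ (s - s₀) ^ 2 * (s + 2 * s₀) := by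
        gcongr; linarith
      have h3 : (s₀ / 2) ^ 2 * (2 * s₀) = s₀ ^ 3 / 2 := by ring
      have : 0 ≤ δ * s := by positivity
      linarith
  have : 0 ≤ δ * s := by positivity
  linarith

lemma aF_pos {δ z : ℝ} (hδ : 0 < δ) (hz : 0 ≤ z) : 0 < aF δ z :=
  one_div_pos.2 (denF_pos hδ hz)

lemma continuousOn_aF {δ : ℝ} (hδ : 0 < δ) : ContinuousOn (aF δ) (Ici 0) := by
  have hd : Continuous (denF δ) := by
    unfold denF
    have : Continuous fun z : ℝ => z ^ ((1:ℝ)/3) := Real.continuous_rpow_const (by norm_num)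
    fun_prop
  exact continuousOn_const.div hd.continuousOn fun z hz => (denF_pos hδ hz).ne'

lemma integral_aF_le {δ : ℝ} (hδ : 0 < δ) (hδ1 : δ ≤ 1) {z ξ : ℝ} (hz : 0 ≤ z) (hzξ : z ≤ ξ)
    (hξ : ξ ≤ 1) : ∫ y in z..ξ, aF δ y ≤ 18 * Real.pi / √δ := by
  have hr : 0 < √δ := Real.sqrt_pos.2 hδ
  have hr2 : √δ ^ 2 = δ := Real.sq_sqrt hδ.le
  set F : ℝ → ℝ := fun y => 18 / √δ * Real.arctan ((y - 1/2) / √δ) with hF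
  have hderiv : ∀ y : ℝ, HasDerivAt F (18 / (δ + (y - 1/2) ^ 2)) y := by
    intro y
    have h1 : HasDerivAt (fun y : ℝ => (y - 1/2) / √δ) (1 / √δ) y :=
      ((hasDerivAt_id y).sub_const _).div_const _
    refine (h1.arctan.const_mul (18 / √δ)).congr_deriv ?_
    have : δ + (y - 1/2) ^ 2 ≠ 0 := by positivity
    have h3 : 1 + ((y - 1/2) / √δ) ^ 2 = (δ + (y - 1/2) ^ 2) / δ := by
      rw [div_pow, hr2]; field_simp
    rw [h3]
    field_simp
    rw [hr2]
  have hcont : Continuous fun y : ℝ => 18 / (δ + (y - 1/2) ^ 2) :=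
    continuous_const.div (by fun_prop) fun y => by positivity
  have hint : ∫ y in z..ξ, 18 / (δ + (y - 1/2) ^ 2) = F ξ - F z :=
    intervalIntegral.integral_eq_sub_of_hasDerivAt (fun y _ => hderiv y)
      (hcont.intervalIntegrable _ _)
  have ha : IntervalIntegrable (aF δ) volume z ξ := by
    refine ((continuousOn_aF hδ).mono fun y hy => ?_).intervalIntegrable
    rw [uIcc_of_le hzξ] at hy
    exact hz.trans hy.1
  calc ∫ y in z..ξ, aF δ y ≤ ∫ y in z..ξ, 18 / (δ + (y - 1/2) ^ 2) := by
        refine intervalIntegral.integral_mono_on hzξ ha (hcont.intervalIntegrable _ _)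
          fun y hy => ?_
        have h1 := denF_lower hδ hδ1 (hz.trans hy.1) (hy.2.trans hξ)
        have h2 : 0 < (δ + (y - 1/2) ^ 2) / 18 := by positivity
        calc aF δ y = 1 / denF δ y := rfl
          _ ≤ 1 / ((δ + (y - 1/2) ^ 2) / 18) := one_div_le_one_div_of_le h2 h1
          _ = _ := by rw [one_div_div]
    _ = 18 / √δ * (Real.arctan ((ξ - 1/2) / √δ) - Real.arctan ((z - 1/2) / √δ)) := by
        rw [hint, hF]; ring
    _ ≤ 18 / √δ * Real.pi := by
        gcongr
        linarith [Real.arctan_lt_pi_div_two ((ξ - 1/2) / √δ),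
          Real.neg_pi_div_two_lt_arctan ((z - 1/2) / √δ)]
    _ = _ := by ring

lemma intervalIntegrable_aF_mul {δ : ℝ} (hδ : 0 < δ) {g : ℝ → ℝ} {z ξ : ℝ} (hz : 0 ≤ z)
    (hzξ : z ≤ ξ) (hg : IntervalIntegrable g volume z ξ) :
    IntervalIntegrable (fun y => aF δ y * g y) volume z ξ := by
  refine hg.continuousOn_mul ((continuousOn_aF hδ).mono fun y hy => ?_)
  rw [uIcc_of_le hzξ] at hy
  exact hz.trans hy.1

lemma intervalIntegrable_exponent {δ : ℝ} (hδ : 0 < δ) (ε εt : ℝ) {z ξ : ℝ} (hz : 0 ≤ z)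
    (hzξ : z ≤ ξ) :
    IntervalIntegrable (fun y => aF δ y * (bF δ y - εt * y - ε)) volume z ξ := by
  refine intervalIntegrable_aF_mul hδ hz hzξ ?_
  have hb : IntervalIntegrable (bF δ) volume z ξ :=
    intervalIntegrable_const.sub
      ((intervalIntegral.intervalIntegrable_rpow' (by norm_num)).const_mul _)
  exact (hb.sub ((continuous_const.mul continuous_id).intervalIntegrable _ _)).sub
    intervalIntegrable_const

lemma intervalIntegrable_drift {δ : ℝ} (hδ : 0 < δ) (ε εt : ℝ) {z ξ : ℝ} (hz : 0 ≤ z)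
    (hzξ : z ≤ ξ) :
    IntervalIntegrable (fun y => aF δ y * (εt * y + ε)) volume z ξ :=
  intervalIntegrable_aF_mul hδ hz hzξ
    (((continuous_const.mul continuous_id).add continuous_const).intervalIntegrable _ _)

lemma exponent_eq {δ : ℝ} (hδ : 0 < δ) (ε εt : ℝ) {z ξ : ℝ} (hz : 0 ≤ z) (hzξ : z ≤ ξ) :
    ∫ y in z..ξ, aF δ y * (bF δ y - εt * y - ε) =
      (∫ y in z..ξ, aF δ y * (bF δ y - 0 * y - 0)) - ∫ y in z..ξ, aF δ y * (εt * y + ε) := by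
  rw [← intervalIntegral.integral_sub (intervalIntegrable_exponent hδ 0 0 hz hzξ)
    (intervalIntegrable_drift hδ ε εt hz hzξ)]
  congr 1
  funext y
  ring

lemma drift_nonneg {δ : ℝ} (hδ : 0 < δ) {ε εt : ℝ} (hε : 0 ≤ ε) (hεt : 0 ≤ εt) {z ξ : ℝ}
    (hz : 0 ≤ z) (hzξ : z ≤ ξ) : 0 ≤ ∫ y in z..ξ, aF δ y * (εt * y + ε) := by
  refine intervalIntegral.integral_nonneg hzξ fun y hy => ?_
  have hy0 : 0 ≤ y := hz.trans hy.1
  have := aF_pos hδ hy0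
  positivity

lemma drift_le {δ : ℝ} (hδ : 0 < δ) (hδ1 : δ ≤ 1) {ε εt : ℝ} (hε : 0 ≤ ε) (hεt : 0 ≤ εt) {z ξ : ℝ}
    (hz : 0 ≤ z) (hzξ : z ≤ ξ) (hξ : ξ ≤ 1) :
    ∫ y in z..ξ, aF δ y * (εt * y + ε) ≤ 18 * Real.pi * (ε + εt) / √δ := by
  calc ∫ y in z..ξ, aF δ y * (εt * y + ε) ≤ ∫ y in z..ξ, aF δ y * (ε + εt) := by
        refine intervalIntegral.integral_mono_on hzξ (intervalIntegrable_drift hδ ε εt hz hzξ)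
          (intervalIntegrable_aF_mul hδ hz hzξ intervalIntegrable_const) fun y hy => ?_
        have := mul_le_mul_of_nonneg_left (hy.2.trans hξ) hεt
        exact mul_le_mul_of_nonneg_left (by linarith) (aF_pos hδ (hz.trans hy.1)).le
    _ = (∫ y in z..ξ, aF δ y) * (ε + εt) := intervalIntegral.integral_mul_const _ _
    _ ≤ 18 * Real.pi / √δ * (ε + εt) := by
        have := integral_aF_le hδ hδ1 hz hzξ hξ
        gcongr
    _ = _ := by ring

lemma gamF_nonneg (i : ℕ) {z : ℝ} (hz : 0 ≤ z) : 0 ≤ gamF i z := by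
  unfold gamF
  split_ifs <;> linarith

lemma intervalIntegrable_Gam {δ : ℝ} (hδ : 0 < δ) (i : ℕ) (ε εt : ℝ) {ξ : ℝ} (hξ : 0 ≤ ξ) :
    IntervalIntegrable (fun z => gamF i z *
      Real.exp (∫ y in z..ξ, aF δ y * (bF δ y - εt * y - ε))) volume 0 ξ := by
  have hg : Continuous (gamF i) := by
    unfold gamF
    split_ifs <;> fun_prop
  have hI := intervalIntegrable_exponent hδ ε εt le_rfl hξ
  rw [intervalIntegrable_iff'] at hI
  exact (hg.continuousOn.mul
    (intervalIntegral.continuousOn_primitive_interval_left hI).rexp).intervalIntegrable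

lemma Gam_le_GamHat {δ : ℝ} (hδ : 0 < δ) {ε εt : ℝ} (hε : 0 ≤ ε) (hεt : 0 ≤ εt) (i : ℕ) {ξ : ℝ}
    (hξ : 0 ≤ ξ) : Gam i δ ε εt ξ ≤ GamHat i δ ξ := by
  refine intervalIntegral.integral_mono_on hξ (intervalIntegrable_Gam hδ i ε εt hξ)
    (intervalIntegrable_Gam hδ i 0 0 hξ) fun z hz => ?_
  refine mul_le_mul_of_nonneg_left (Real.exp_le_exp.2 ?_) (gamF_nonneg i hz.1)
  rw [exponent_eq hδ ε εt hz.1 hz.2]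
  linarith [drift_nonneg hδ hε hεt hz.1 hz.2]

lemma exp_mul_GamHat_le_Gam {δ : ℝ} (hδ : 0 < δ) (hδ1 : δ ≤ 1) {ε εt : ℝ} (hε : 0 ≤ ε)
    (hεt : 0 ≤ εt) (i : ℕ) {ξ : ℝ} (hξ : 0 ≤ ξ) (hξ1 : ξ ≤ 1) :
    Real.exp (-(18 * Real.pi * (ε + εt) / √δ)) * GamHat i δ ξ ≤ Gam i δ ε εt ξ := by
  unfold GamHat Gam
  rw [← intervalIntegral.integral_const_mul]
  refine intervalIntegral.integral_mono_on hξ ((intervalIntegrable_Gam hδ i 0 0 hξ).const_mul _)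
    (intervalIntegrable_Gam hδ i ε εt hξ) fun z hz => ?_
  rw [mul_left_comm, ← Real.exp_add]
  refine mul_le_mul_of_nonneg_left (Real.exp_le_exp.2 ?_) (gamF_nonneg i hz.1)
  rw [exponent_eq hδ ε εt hz.1 hz.2]
  linarith [drift_le hδ hδ1 hε hεt hz.1 hz.2 hξ1]

lemma GamHat_nonneg (i : ℕ) (δ : ℝ) {ξ : ℝ} (hξ : 0 ≤ ξ) : 0 ≤ GamHat i δ ξ :=
  intervalIntegral.integral_nonneg hξ fun _ hz =>
    mul_nonneg (gamF_nonneg i hz.1) (Real.exp_pos _).le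

/-- comparison of Γ_i and Γ̂_i. -/
theorem stmt14 :
    ∃ C : ℝ, 0 < C ∧ ∀ δ ∈ Ioc (0:ℝ) 1, ∀ ε εt : ℝ, 0 ≤ ε → 0 ≤ εt →
      ∀ i ∈ ({1, 2} : Set ℕ),
        (∀ ξ : ℝ, 0 ≤ ξ → Gam i δ ε εt ξ ≤ GamHat i δ ξ) ∧
        (∀ ξ ∈ Icc (0:ℝ) 1,
          0 ≤ GamHat i δ ξ - Gam i δ ε εt ξ ∧
          GamHat i δ ξ - Gam i δ ε εt ξ ≤
            (Real.exp (C * (ε + εt) / Real.sqrt δ) - 1) * GamHat i δ ξ) := by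
  refine ⟨18 * Real.pi, by positivity, fun δ hδ ε εt hε hεt i _ =>
    ⟨fun ξ hξ => Gam_le_GamHat hδ.1 hε hεt i hξ, fun ξ hξ =>
      ⟨sub_nonneg.2 (Gam_le_GamHat hδ.1 hε hεt i hξ.1), ?_⟩⟩⟩
  have h1 := exp_mul_GamHat_le_Gam hδ.1 hδ.2 hε hεt i hξ.1 hξ.2
  have h0 := GamHat_nonneg i δ hξ.1
  set K := 18 * Real.pi * (ε + εt) / √δ
  -- `e^K + e^{-K} ≥ 2`
  have h2 : 0 ≤ Real.exp K + Real.exp (-K) - 2 := by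
    linarith [Real.add_one_le_exp K, Real.add_one_le_exp (-K)]
  nlinarith [mul_nonneg h2 h0]
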